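/- Let p be an odd prime, n ≥ 2, q = p^n, and let K be a field of characteristic p. With A = K[M] the group algebra of M = ZMod q × ZMod q, let P_• be the explicit complex of free A-modules with P_k free on e_0^k, …, e_k^k and differential ∂ as specified, let σ be the K-algebra automorphism of A induced by a ↦ ab, b ↦ b, and let α be the σ-semilinear degree-0 map given by the explicit formulas. Then ∂ ∘ α = α ∘ ∂, i.e. α commutes with the differential of P_•. -/

import Mathlib

noncomputable section

open MonoidAlgebra Finset

/-- The group `M = ZMod q × ZMod q`, written multiplicatively. -/
abbrev Mgrp (q : ℕ) : Type := Multiplicative (ZMod q × ZMod q)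

/-- The group algebra `A = K[M]`. -/
abbrev GrpAlg (K : Type) [Field K] (q : ℕ) : Type := MonoidAlgebra K (Mgrp q)

variable (K : Type) [Field K] (q : ℕ)

/-- The generator `a = (1,0)` of `M`, as an element of `K[M]`. -/
def aEl : GrpAlg K q := MonoidAlgebra.of K (Mgrp q) (Multiplicative.ofAdd (1, 0))

/-- The generator `b = (0,1)` of `M`, as an element of `K[M]`. -/
def bEl : GrpAlg K q := MonoidAlgebra.of K (Mgrp q) (Multiplicative.ofAdd (0, 1))

/-- `N(x) = ∑_{i=0}^{q−1} x^i`. -/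
def Nel (x : GrpAlg K q) : GrpAlg K q := ∑ i ∈ range q, x ^ i

/-- `ρ = ∑_{0 ≤ j ≤ i ≤ q−1} a^i b^j`. -/
def ρEl : GrpAlg K q :=
  ∑ ij ∈ (range q ×ˢ range q).filter (fun ij => ij.2 ≤ ij.1), aEl K q ^ ij.1 * bEl K q ^ ij.2

/-- `κ = ∑_{i=0}^{q−1} (i+1)·a^i`, with coefficients `(i+1)` taken in `K`. -/
def κEl : GrpAlg K q := ∑ i ∈ range q, ((i : K) + 1) • aEl K q ^ i

/-- The group automorphism `(i,j) ↦ (i, i+j)` of `M` (i.e. `a ↦ ab`, `b ↦ b`). -/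
def sigmaGrp (q : ℕ) : Mgrp q ≃* Mgrp q :=
  AddEquiv.toMultiplicative
    { toFun := fun x => (x.1, x.1 + x.2)
      invFun := fun x => (x.1, x.2 - x.1)
      left_inv := fun x => by simp
      right_inv := fun x => by simp
      map_add' := fun x y => by simp [Prod.ext_iff]; ring }

/-- The `K`-algebra automorphism `σ` of `A = K[M]` induced by the group automorphism
`a ↦ ab`, `b ↦ b` of `M`. -/
def σAlg : GrpAlg K q ≃ₐ[K] GrpAlg K q := MonoidAlgebra.domCongr K K (sigmaGrp q)

/-- `P_k`: the free `A`-module with basis `e_0^k, …, e_k^k`. -/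
abbrev PmodV (k : ℕ) : Type := Fin (k + 1) → GrpAlg K q

/-- The basis element `e_j^k` of `P_k`, indexed by `j : ℤ`, with the convention that
`e_j^k = 0` when `j < 0` or `j > k`. -/
def eZ (k : ℕ) (j : ℤ) : PmodV K q k :=
  if h : 0 ≤ j ∧ j < (k : ℤ) + 1 then Pi.single (⟨j.toNat, by omega⟩ : Fin (k + 1)) 1 else 0

/-- The image under the differential `∂ : P_{k+1} → P_k` of the basis element
`e_idx^{k+1}`, following the parity of the degree `k+1` and of the index `idx`:
`∂(e_{2j}^{2i}) = N(a)·e_{2j}^{2i−1} + N(b)·e_{2j−1}^{2i−1}`,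
`∂(e_{2j+1}^{2i}) = (a−1)·e_{2j+1}^{2i−1} − (b−1)·e_{2j}^{2i−1}`,
`∂(e_{2j}^{2i+1}) = (a−1)·e_{2j}^{2i} − N(b)·e_{2j−1}^{2i}`,
`∂(e_{2j+1}^{2i+1}) = N(a)·e_{2j+1}^{2i} + (b−1)·e_{2j}^{2i}`. -/
def delB (k idx : ℕ) : PmodV K q k :=
  if (k + 1) % 2 = 0 then
    if idx % 2 = 0 then
      Nel K q (aEl K q) • eZ K q k (idx : ℤ) + Nel K q (bEl K q) • eZ K q k ((idx : ℤ) - 1)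
    else
      (aEl K q - 1) • eZ K q k (idx : ℤ) - (bEl K q - 1) • eZ K q k ((idx : ℤ) - 1)
  else
    if idx % 2 = 0 then
      (aEl K q - 1) • eZ K q k (idx : ℤ) - Nel K q (bEl K q) • eZ K q k ((idx : ℤ) - 1)
    else
      Nel K q (aEl K q) • eZ K q k (idx : ℤ) + (bEl K q - 1) • eZ K q k ((idx : ℤ) - 1)

/-- The `A`-linear differential `∂ : P_{k+1} → P_k`. -/
def delMap (k : ℕ) (x : PmodV K q (k + 1)) : PmodV K q k :=
  ∑ j : Fin (k + 2), x j • delB K q k j.val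

/-- The image under `α : P_d → P_d` of the basis element `e_idx^d`:
`α(e_{2j}^{2i}) = ∑_{j ≤ m ≤ i} C(m,j)·(e_{2m}^{2i} − ρ·e_{2m+1}^{2i})`,
`α(e_{2j+1}^{2i}) = ∑_{j ≤ m ≤ i} C(m,j)·b·e_{2m+1}^{2i}`,
`α(e_{2j}^{2i+1}) = ∑_{j ≤ m ≤ i} C(m,j)·(b·e_{2m}^{2i+1} + e_{2m+1}^{2i+1})`,
`α(e_{2j+1}^{2i+1}) = ∑_{j ≤ m ≤ i} C(m,j)·e_{2m+1}^{2i+1}`,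
with binomial coefficients taken in `K`. -/
def alphaB (d idx : ℕ) : PmodV K q d :=
  if d % 2 = 0 then
    if idx % 2 = 0 then
      ∑ m ∈ Finset.Icc (idx / 2) (d / 2), (m.choose (idx / 2) : K) •
        (eZ K q d (2 * m : ℕ) - ρEl K q • eZ K q d ((2 * m : ℕ) + 1))
    else
      ∑ m ∈ Finset.Icc (idx / 2) (d / 2), (m.choose (idx / 2) : K) •
        (bEl K q • eZ K q d ((2 * m : ℕ) + 1))
  else
    if idx % 2 = 0 then
      ∑ m ∈ Finset.Icc (idx / 2) (d / 2), (m.choose (idx / 2) : K) •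
        (bEl K q • eZ K q d (2 * m : ℕ) + eZ K q d ((2 * m : ℕ) + 1))
    else
      ∑ m ∈ Finset.Icc (idx / 2) (d / 2), (m.choose (idx / 2) : K) •
        eZ K q d ((2 * m : ℕ) + 1)

/-- The `σ`-semilinear map `α : P_d → P_d` (it satisfies `α(λ·x) = σ(λ)·α(x)`). -/
def alphaMap (d : ℕ) (x : PmodV K q d) : PmodV K q d :=
  ∑ j : Fin (d + 1), σAlg K q (x j) • alphaB K q d j.val

/-- The image under `τ : P_d → P_{d+1}` of the basis element `e_idx^d`:
`τ(e_{2j}^{2i}) = −(j+1)·κ·e_{2j+2}^{2i+1}`, `τ(e_{2j+1}^{2i}) = −(j+1)·e_{2j+3}^{2i+1}`,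
`τ(e_{2j}^{2i+1}) = −(j+1)·e_{2j+2}^{2i+2}`, `τ(e_{2j+1}^{2i+1}) = −(j+1)·κ·e_{2j+3}^{2i+2}`,
with the coefficients `j+1` taken in `K`. -/
def tauB (d idx : ℕ) : PmodV K q (d + 1) :=
  if d % 2 = 0 then
    if idx % 2 = 0 then
      -(((idx / 2 : ℕ) + 1 : K) • (κEl K q • eZ K q (d + 1) ((idx : ℤ) + 2)))
    else
      -(((idx / 2 : ℕ) + 1 : K) • eZ K q (d + 1) ((idx : ℤ) + 2))
  else
    if idx % 2 = 0 then
      -(((idx / 2 : ℕ) + 1 : K) • eZ K q (d + 1) ((idx : ℤ) + 2))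
    else
      -(((idx / 2 : ℕ) + 1 : K) • (κEl K q • eZ K q (d + 1) ((idx : ℤ) + 2)))

/-- The `A`-linear map `τ : P_d → P_{d+1}`. -/
def tauMap (d : ℕ) (x : PmodV K q d) : PmodV K q (d + 1) :=
  ∑ j : Fin (d + 1), x j • tauB K q d j.val


section helpers

variable {K q}

lemma h_aq : aEl K q ^ q = 1 := by
  rw [aEl, ← map_pow, ← ofAdd_nsmul]
  simp [MonoidAlgebra.one_def]
  rfl

lemma h_bq : bEl K q ^ q = 1 := by
  rw [bEl, ← map_pow, ← ofAdd_nsmul]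
  simp [MonoidAlgebra.one_def]
  rfl

lemma h_sa : σAlg K q (aEl K q) = aEl K q * bEl K q := by
  simp [σAlg, aEl, bEl, sigmaGrp, MonoidAlgebra.single_mul_single, ← ofAdd_add]

lemma h_sb : σAlg K q (bEl K q) = bEl K q := by
  simp [σAlg, bEl, sigmaGrp]

lemma h_sN (x : GrpAlg K q) : σAlg K q (Nel K q x) = Nel K q (σAlg K q x) := by
  simp [Nel]

lemma h_N (x : GrpAlg K q) (hx : x ^ q = 1) : x * Nel K q x = Nel K q x := by
  have := mul_geom_sum x q
  rw [hx, sub_self] at this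
  unfold Nel
  linear_combination this

lemma h_rho1 : ρEl K q = ∑ i ∈ range q, aEl K q ^ i * ∑ j ∈ range (i + 1), bEl K q ^ j := by
  rw [ρEl, Finset.sum_filter, Finset.sum_product]
  refine Finset.sum_congr rfl fun i hi => ?_
  rw [Finset.mul_sum, ← Finset.sum_filter]
  refine Finset.sum_congr ?_ fun _ _ => rfl
  ext j
  simp only [Finset.mem_filter, Finset.mem_range] at *
  omega

lemma h_rho2 : ρEl K q = ∑ j ∈ range q, bEl K q ^ j * ∑ i ∈ Finset.Ico j q, aEl K q ^ i := by
  rw [ρEl, Finset.sum_filter, Finset.sum_product_right]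
  refine Finset.sum_congr rfl fun i hi => ?_
  rw [Finset.mul_sum, ← Finset.sum_filter]
  refine Finset.sum_congr ?_ fun _ _ => mul_comm _ _
  ext j
  simp only [Finset.mem_filter, Finset.mem_range, Finset.mem_Ico] at *
  omega

lemma h_r1 : ρEl K q * (bEl K q - 1)
    = bEl K q * Nel K q (aEl K q * bEl K q) - Nel K q (aEl K q) := by
  rw [h_rho1, Finset.sum_mul, Nel, Nel, Finset.mul_sum, ← Finset.sum_sub_distrib]
  refine Finset.sum_congr rfl fun i hi => ?_
  rw [mul_assoc, geom_sum_mul]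
  ring

lemma h_r2 : ρEl K q * (aEl K q - 1)
    = Nel K q (bEl K q) - Nel K q (aEl K q * bEl K q) := by
  rw [h_rho2, Finset.sum_mul, Nel, Nel, ← Finset.sum_sub_distrib]
  refine Finset.sum_congr rfl fun i hi => ?_
  rw [mul_assoc, geom_sum_Ico_mul _ (Finset.mem_range.1 hi).le, h_aq]
  ring

lemma h_r3 : ρEl K q * (aEl K q * bEl K q - 1) = Nel K q (bEl K q) - Nel K q (aEl K q) := by
  have h1 := h_r1 (K := K) (q := q)
  have h2 := h_r2 (K := K) (q := q)
  have h3 := h_N (aEl K q) h_aq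
  have h4 := h_N (aEl K q * bEl K q) (by rw [mul_pow, h_aq, h_bq, one_mul])
  linear_combination aEl K q * h1 + h2 - h3 + h4

lemma eZ_zero {k : ℕ} {j : ℤ} (h : j < 0 ∨ (k : ℤ) + 1 ≤ j) : eZ K q k j = 0 := by
  rw [eZ, dif_neg]; omega

/-- linear version of del -/
def delL (k : ℕ) : PmodV K q (k + 1) →ₗ[GrpAlg K q] PmodV K q k where
  toFun := delMap K q k
  map_add' x y := by simp [delMap, add_smul, Finset.sum_add_distrib]
  map_smul' c x := by simp [delMap, mul_smul, Finset.smul_sum]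

/-- semilinear version of alpha -/
def alphaL (d : ℕ) : PmodV K q d →ₛₗ[((σAlg K q : GrpAlg K q ≃+* GrpAlg K q) :
    GrpAlg K q →+* GrpAlg K q)] PmodV K q d where
  toFun := alphaMap K q d
  map_add' x y := by simp [alphaMap, add_smul, Finset.sum_add_distrib]
  map_smul' c x := by simp [alphaMap, mul_smul, Finset.smul_sum]

lemma delL_e (k idx : ℕ) : delL k (eZ K q (k + 1) idx) = delB K q k idx := by
  by_cases h : idx < k + 2
  · rw [eZ, dif_pos (by push_cast; omega)]
    change delMap K q k _ = _
    rw [delMap, Finset.sum_eq_single ⟨idx, h⟩]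
    · simp
    · intro b _ hb
      rw [Pi.single_eq_of_ne, zero_smul]
      simpa using hb
    · simp
  · rw [eZ_zero (by push_cast; omega), map_zero, delB, eZ_zero (by omega), eZ_zero (by omega)]
    simp

lemma alphaB_zero {d idx : ℕ} (h : d < idx) : alphaB K q d idx = 0 := by
  unfold alphaB
  split_ifs with h1 h2 h2
  · rw [Finset.Icc_eq_empty (by omega), Finset.sum_empty]
  · refine Finset.sum_eq_zero fun m hm => ?_
    rw [Finset.mem_Icc] at hm
    rw [eZ_zero (by push_cast; omega)]; simp
  · rw [Finset.Icc_eq_empty (by omega), Finset.sum_empty]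
  · rw [Finset.Icc_eq_empty (by omega), Finset.sum_empty]

lemma alphaL_e (d idx : ℕ) : alphaL d (eZ K q d idx) = alphaB K q d idx := by
  by_cases h : idx < d + 1
  · rw [eZ, dif_pos (by push_cast; omega)]
    change alphaMap K q d _ = _
    rw [alphaMap, Finset.sum_eq_single ⟨idx, h⟩]
    · simp
    · intro b _ hb
      rw [Pi.single_eq_of_ne, map_zero, zero_smul]
      simpa using hb
    · simp
  · rw [eZ_zero (by omega), map_zero, alphaB_zero (by omega)]

lemma sum_ext {d j L : ℕ} (hL : d / 2 < L) (f : ℕ → PmodV K q d)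
    (hf : ∀ m, d / 2 < m → f m = 0) :
    ∑ m ∈ Finset.Icc j (d / 2), (m.choose j : K) • f m = ∑ m ∈ range L, m.choose j • f m := by
  simp only [Nat.cast_smul_eq_nsmul]
  refine Finset.sum_subset (fun m => by simp; omega) fun m _ hm => ?_
  rw [Finset.mem_Icc] at hm
  by_cases h : m < j
  · rw [Nat.choose_eq_zero_of_lt h, zero_smul]
  · rw [hf m (by omega), smul_zero]

lemma al_ee {d L : ℕ} (hd : d % 2 = 0) (hL : d / 2 < L) (j : ℕ) :
    alphaL d (eZ K q d (2 * j : ℤ)) = ∑ m ∈ range L, m.choose j •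
      (eZ K q d (2 * m : ℤ) - ρEl K q • eZ K q d (2 * m + 1 : ℤ)) := by
  have := alphaL_e (K := K) (q := q) d (2 * j)
  push_cast at this
  rw [this, alphaB, if_pos hd, if_pos (by omega), show 2 * j / 2 = j by omega, sum_ext hL]
  · push_cast; rfl
  · intro m hm
    rw [eZ_zero (by push_cast; omega), eZ_zero (by push_cast; omega)]; simp

lemma al_eo {d L : ℕ} (hd : d % 2 = 0) (hL : d / 2 < L) (j : ℕ) :
    alphaL d (eZ K q d (2 * j + 1 : ℤ)) = ∑ m ∈ range L, m.choose j •
      (bEl K q • eZ K q d (2 * m + 1 : ℤ)) := by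
  have := alphaL_e (K := K) (q := q) d (2 * j + 1)
  push_cast at this
  rw [this, alphaB, if_pos hd, if_neg (by omega), show (2 * j + 1) / 2 = j by omega, sum_ext hL]
  · push_cast; rfl
  · intro m hm
    rw [eZ_zero (by push_cast; omega)]; simp

lemma al_oe {d L : ℕ} (hd : d % 2 = 1) (hL : d / 2 < L) (j : ℕ) :
    alphaL d (eZ K q d (2 * j : ℤ)) = ∑ m ∈ range L, m.choose j •
      (bEl K q • eZ K q d (2 * m : ℤ) + eZ K q d (2 * m + 1 : ℤ)) := by
  have := alphaL_e (K := K) (q := q) d (2 * j)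
  push_cast at this
  rw [this, alphaB, if_neg (by omega), if_pos (by omega), show 2 * j / 2 = j by omega, sum_ext hL]
  · push_cast; rfl
  · intro m hm
    rw [eZ_zero (by push_cast; omega), eZ_zero (by push_cast; omega)]; simp

lemma al_oo {d L : ℕ} (hd : d % 2 = 1) (hL : d / 2 < L) (j : ℕ) :
    alphaL d (eZ K q d (2 * j + 1 : ℤ)) = ∑ m ∈ range L, m.choose j •
      (eZ K q d (2 * m + 1 : ℤ)) := by
  have := alphaL_e (K := K) (q := q) d (2 * j + 1)
  push_cast at this
  rw [this, alphaB, if_neg (by omega), if_neg (by omega), show (2 * j + 1) / 2 = j by omega,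
    sum_ext hL]
  · push_cast; rfl
  · intro m hm
    rw [eZ_zero (by push_cast; omega)]

/-- the binomial coefficient with lower index shifted by one -/
def Dc (m j : ℕ) : ℕ := if j = 0 then 0 else m.choose (j - 1)

lemma Dc_spec (m j : ℕ) : (m + 1).choose j = m.choose j + Dc m j := by
  cases j with
  | zero => simp [Dc]
  | succ j => simp [Dc, Nat.choose_succ_succ, add_comm]

lemma al_ep {d L : ℕ} (hd : d % 2 = 0) (hL : d / 2 < L) (j : ℕ) :
    alphaL d (eZ K q d (2 * j - 1 : ℤ)) = ∑ m ∈ range L, Dc m j •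
      (bEl K q • eZ K q d (2 * m + 1 : ℤ)) := by
  cases j with
  | zero => rw [eZ_zero (by simp), map_zero]; simp [Dc]
  | succ j =>
    rw [show (2 * (j + 1 : ℕ) - 1 : ℤ) = 2 * j + 1 by push_cast; ring, al_eo hd hL]
    simp [Dc]

lemma al_op {d L : ℕ} (hd : d % 2 = 1) (hL : d / 2 < L) (j : ℕ) :
    alphaL d (eZ K q d (2 * j - 1 : ℤ)) = ∑ m ∈ range L, Dc m j •
      (eZ K q d (2 * m + 1 : ℤ)) := by
  cases j with
  | zero => rw [eZ_zero (by simp), map_zero]; simp [Dc]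
  | succ j =>
    rw [show (2 * (j + 1 : ℕ) - 1 : ℤ) = 2 * j + 1 by push_cast; ring, al_oo hd hL]
    simp [Dc]

lemma shift {d L : ℕ} (hL : d / 2 + 1 < L) (j : ℕ) :
    ∑ m ∈ range L, m.choose j • eZ K q d (2 * m - 1 : ℤ)
      = ∑ m ∈ range L, (m.choose j + Dc m j) • eZ K q d (2 * m + 1 : ℤ) := by
  obtain ⟨L, rfl⟩ : ∃ l, L = l + 1 := ⟨L - 1, by omega⟩
  rw [Finset.sum_range_succ', Finset.sum_range_succ _ L, eZ_zero (j := 2 * (0 : ℕ) - 1) (by simp),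
    eZ_zero (j := 2 * (L : ℤ) + 1) (by omega), smul_zero, smul_zero, add_zero, add_zero]
  refine Finset.sum_congr rfl fun m _ => ?_
  rw [← Dc_spec]
  congr 2
  push_cast; ring

lemma d_ee {k : ℕ} (hk : k % 2 = 1) (j : ℕ) : delL k (eZ K q (k + 1) (2 * j : ℤ)) =
    Nel K q (aEl K q) • eZ K q k (2 * j : ℤ) + Nel K q (bEl K q) • eZ K q k (2 * j - 1 : ℤ) := by
  have := delL_e (K := K) (q := q) k (2 * j)
  push_cast at this
  rw [this, delB, if_pos (by omega), if_pos (by omega)]; push_cast; rfl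

lemma d_eo {k : ℕ} (hk : k % 2 = 1) (j : ℕ) : delL k (eZ K q (k + 1) (2 * j + 1 : ℤ)) =
    (aEl K q - 1) • eZ K q k (2 * j + 1 : ℤ) - (bEl K q - 1) • eZ K q k (2 * j : ℤ) := by
  have := delL_e (K := K) (q := q) k (2 * j + 1)
  push_cast at this
  rw [this, delB, if_pos (by omega), if_neg (by omega)]; push_cast; simp

lemma d_oe {k : ℕ} (hk : k % 2 = 0) (j : ℕ) : delL k (eZ K q (k + 1) (2 * j : ℤ)) =
    (aEl K q - 1) • eZ K q k (2 * j : ℤ) - Nel K q (bEl K q) • eZ K q k (2 * j - 1 : ℤ) := by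
  have := delL_e (K := K) (q := q) k (2 * j)
  push_cast at this
  rw [this, delB, if_neg (by omega), if_pos (by omega)]; push_cast; rfl

lemma d_oo {k : ℕ} (hk : k % 2 = 0) (j : ℕ) : delL k (eZ K q (k + 1) (2 * j + 1 : ℤ)) =
    Nel K q (aEl K q) • eZ K q k (2 * j + 1 : ℤ) + (bEl K q - 1) • eZ K q k (2 * j : ℤ) := by
  have := delL_e (K := K) (q := q) k (2 * j + 1)
  push_cast at this
  rw [this, delB, if_neg (by omega), if_neg (by omega)]; push_cast; simp

lemma al_smul {d : ℕ} (c : GrpAlg K q) (x : PmodV K q d) :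
    alphaL d (c • x) = σAlg K q c • alphaL d x := (alphaL d).map_smulₛₗ c x

lemma key_ee {k : ℕ} (hk : k % 2 = 1) (j : ℕ) :
    delL k (alphaL (k + 1) (eZ K q (k + 1) (2 * j : ℤ)))
      = alphaL k (delL k (eZ K q (k + 1) (2 * j : ℤ))) := by
  have hs := shift (K := K) (q := q) (d := k) (L := k + 3) (by omega) j
  have h1 := h_r1 (K := K) (q := q)
  have h2 := h_r2 (K := K) (q := q)
  rw [al_ee (L := k + 3) (by omega) (by omega), d_ee hk, map_add, al_smul, al_smul,
    al_oe (L := k + 3) hk (by omega), al_op (L := k + 3) hk (by omega), h_sN, h_sN, h_sa, h_sb]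
  simp only [map_sum, map_nsmul, map_sub, map_smul, d_ee hk, d_eo hk]
  have e : ∀ m ∈ range (k + 3), m.choose j • (Nel K q (aEl K q) • eZ K q k (2 * m : ℤ)
      + Nel K q (bEl K q) • eZ K q k (2 * m - 1 : ℤ) - ρEl K q • ((aEl K q - 1) •
        eZ K q k (2 * m + 1 : ℤ) - (bEl K q - 1) • eZ K q k (2 * m : ℤ)))
      = Nel K q (bEl K q) • (m.choose j • eZ K q k (2 * m - 1 : ℤ)) +
        m.choose j • ((Nel K q (aEl K q) + ρEl K q * (bEl K q - 1)) • eZ K q k (2 * m : ℤ)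
        - (ρEl K q * (aEl K q - 1)) • eZ K q k (2 * m + 1 : ℤ)) := by
    intro m _; module
  rw [Finset.sum_congr rfl e, Finset.sum_add_distrib, ← Finset.smul_sum, hs, h1, h2]
  simp only [Finset.smul_sum, ← Finset.sum_add_distrib]
  refine Finset.sum_congr rfl fun m _ => ?_
  module

lemma key_eo {k : ℕ} (hk : k % 2 = 1) (j : ℕ) :
    delL k (alphaL (k + 1) (eZ K q (k + 1) (2 * j + 1 : ℤ)))
      = alphaL k (delL k (eZ K q (k + 1) (2 * j + 1 : ℤ))) := by
  rw [al_eo (L := k + 3) (by omega) (by omega), d_eo hk, map_sub, al_smul, al_smul,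
    al_oe (L := k + 3) hk (by omega), al_oo (L := k + 3) hk (by omega), map_sub, map_sub, map_one,
    h_sa, h_sb]
  simp only [map_sum, map_nsmul, map_smul, d_eo hk]
  simp only [Finset.smul_sum, ← Finset.sum_sub_distrib]
  refine Finset.sum_congr rfl fun m _ => ?_
  module

lemma key_oe {k : ℕ} (hk : k % 2 = 0) (j : ℕ) :
    delL k (alphaL (k + 1) (eZ K q (k + 1) (2 * j : ℤ)))
      = alphaL k (delL k (eZ K q (k + 1) (2 * j : ℤ))) := by
  have hs := shift (K := K) (q := q) (d := k) (L := k + 3) (by omega) j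
  have h3 := h_r3 (K := K) (q := q)
  have h4 := h_N (bEl K q) h_bq
  rw [al_oe (L := k + 3) (by omega) (by omega), d_oe hk, map_sub, al_smul, al_smul,
    al_ee (L := k + 3) hk (by omega), al_ep (L := k + 3) hk (by omega), h_sN, map_sub, map_one,
    h_sa, h_sb]
  simp only [map_sum, map_nsmul, map_add, map_smul, d_oe hk, d_oo hk]
  have e : ∀ m ∈ range (k + 3), m.choose j • (bEl K q • ((aEl K q - 1) • eZ K q k (2 * m : ℤ)
      - Nel K q (bEl K q) • eZ K q k (2 * m - 1 : ℤ)) + (Nel K q (aEl K q) •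
        eZ K q k (2 * m + 1 : ℤ) + (bEl K q - 1) • eZ K q k (2 * m : ℤ)))
      = m.choose j • ((aEl K q * bEl K q - 1) • eZ K q k (2 * m : ℤ)
        + Nel K q (aEl K q) • eZ K q k (2 * m + 1 : ℤ))
        - (bEl K q * Nel K q (bEl K q)) • (m.choose j • eZ K q k (2 * m - 1 : ℤ)) := by
    intro m _; module
  rw [Finset.sum_congr rfl e, Finset.sum_sub_distrib, ← Finset.smul_sum, hs]
  simp only [Finset.smul_sum, ← Finset.sum_sub_distrib]
  refine Finset.sum_congr rfl fun m _ => ?_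
  match_scalars
  · ring
  · linear_combination (m.choose j : GrpAlg K q) * h3 - (m.choose j : GrpAlg K q) * h4

lemma key_oo {k : ℕ} (hk : k % 2 = 0) (j : ℕ) :
    delL k (alphaL (k + 1) (eZ K q (k + 1) (2 * j + 1 : ℤ)))
      = alphaL k (delL k (eZ K q (k + 1) (2 * j + 1 : ℤ))) := by
  have h1 := h_r1 (K := K) (q := q)
  rw [al_oo (L := k + 3) (by omega) (by omega), d_oo hk, map_add, al_smul, al_smul,
    al_ee (L := k + 3) hk (by omega), al_eo (L := k + 3) hk (by omega), map_sub, map_one,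
    h_sN, h_sa, h_sb]
  simp only [map_sum, map_nsmul, d_oo hk]
  simp only [Finset.smul_sum, ← Finset.sum_add_distrib]
  refine Finset.sum_congr rfl fun m _ => ?_
  match_scalars
  · linear_combination (m.choose j : GrpAlg K q) * h1
  · ring

lemma key (k idx : ℕ) : delL k (alphaB K q (k + 1) idx) = alphaL k (delB K q k idx) := by
  rw [← delL_e, ← alphaL_e]
  obtain ⟨j, rfl | rfl⟩ := Nat.even_or_odd' idx <;> push_cast <;>
    rcases Nat.mod_two_eq_zero_or_one k with hk | hk
  · exact key_oe hk j
  · exact key_ee hk j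
  · exact key_oo hk j
  · exact key_eo hk j

end helpers

/-- for an odd prime `p`, `n ≥ 2`, `q = p^n` and `K` of characteristic `p`,
the `σ`-semilinear map `α` commutes with the differential `∂` of the complex `P_•`:
`∂ ∘ α = α ∘ ∂`. -/
theorem stmt14 (p n : ℕ) (hp : p.Prime) (hodd : Odd p) (hn : 2 ≤ n)
    (hchar : CharP K p) (hq : q = p ^ n) (k : ℕ) (x : PmodV K q (k + 1)) :
    delMap K q k (alphaMap K q (k + 1) x) = alphaMap K q k (delMap K q k x) := by
  change delL k (∑ j : Fin (k + 2), σAlg K q (x j) • alphaB K q (k + 1) j.val)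
    = alphaL k (∑ j : Fin (k + 2), x j • delB K q k j.val)
  rw [map_sum, map_sum]
  refine Finset.sum_congr rfl fun j _ => ?_
  rw [map_smul, al_smul, key]
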